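/- arXiv:1912.06611 — 2 statements merged into one kernel-verified Lean document; each statement's English description precedes it below -/
import Mathlib

section
/- The real number ζ(3) = ∑_{i=1}^∞ 1/i³ is irrational; that is, there is no rational number r with ζ(3) = r. -/
/-- ζ(3), the sum of the series ∑_{i=1}^∞ 1/i³. -/
noncomputable def zeta3 : ℝ := ∑' i : ℕ, 1 / ((i : ℝ) + 1) ^ 3

namespace Apery

open Finset

/-- `C(n,k) C(n+k,k)` as a real number. -/
noncomputable def bin (n k : ℕ) : ℝ := (n.choose k : ℝ) * ((n + k).choose k : ℝ)

/-- Apéry's `c_{n,k}`. -/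
noncomputable def c (n k : ℕ) : ℝ :=
  ∑ m ∈ range n, 1 / ((m : ℝ) + 1) ^ 3 +
    ∑ m ∈ range k, (-1 : ℝ) ^ m / (2 * ((m : ℝ) + 1) ^ 3 * bin n (m + 1))

noncomputable def b (n : ℕ) : ℝ := ∑ k ∈ range (n + 1), bin n k ^ 2

noncomputable def a (n : ℕ) : ℝ := ∑ k ∈ range (n + 1), bin n k ^ 2 * c n k

lemma bin_eq_zero {n k : ℕ} (h : n < k) : bin n k = 0 := by
  simp [bin, Nat.choose_eq_zero_of_lt h]

lemma bin_zero (n : ℕ) : bin n 0 = 1 := by simp [bin]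

lemma bin_pos {n k : ℕ} (h : k ≤ n) : 0 < bin n k := by
  have h1 := Nat.choose_pos h
  have h2 : 0 < (n + k).choose k := Nat.choose_pos (by omega)
  unfold bin; positivity

lemma bin_fact (k j : ℕ) :
    bin (k + j) k * ((j.factorial : ℝ) * (k.factorial : ℝ) ^ 2) = ((k + j + k).factorial : ℝ) := by
  have h1 := Nat.add_choose_mul_factorial_mul_factorial j k
  have h2 := Nat.add_choose_mul_factorial_mul_factorial (k + j) k
  have e1 : (j + k).choose k = (k + j).choose k := by rw [add_comm]
  simp only [e1] at h1
  have h1' : ((k + j).choose k : ℝ) * j.factorial * k.factorial = ((j + k).factorial : ℝ) := by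
    exact_mod_cast h1
  have h2' : ((k + j + k).choose k : ℝ) * (k + j).factorial * k.factorial
      = ((k + j + k).factorial : ℝ) := by exact_mod_cast h2
  rw [add_comm j k] at h1'
  unfold bin
  rw [← h2', ← h1']; ring

/-- common factor -/
noncomputable def Y (N k : ℕ) : ℝ :=
  ((N + k).factorial : ℝ) / (((N - k).factorial : ℝ) * ((k + 1).factorial : ℝ) ^ 2)

lemma Y_pos (N k : ℕ) : 0 < Y N k := by unfold Y; positivity

lemma Y_fact (k j : ℕ) :
    Y (k + j) k * ((j.factorial : ℝ) * (((k : ℝ) + 1) ^ 2 * (k.factorial : ℝ) ^ 2))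
      = ((k + j + k).factorial : ℝ) := by
  unfold Y
  rw [Nat.add_sub_cancel_left, Nat.factorial_succ]
  have := Nat.factorial_pos j
  have := Nat.factorial_pos k
  push_cast
  field_simp

lemma bin_Y1 {N k : ℕ} (h : k ≤ N) : bin N k = Y N k * ((k : ℝ) + 1) ^ 2 := by
  obtain ⟨j, rfl⟩ := Nat.exists_eq_add_of_le h
  have h1 := bin_fact k j
  have h2 := Y_fact k j
  have hp : (0 : ℝ) < (j.factorial : ℝ) * (k.factorial : ℝ) ^ 2 := by positivity
  apply mul_right_cancel₀ hp.ne'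
  rw [h1, ← h2]; ring

lemma bin_rec_k (n k : ℕ) :
    ((k : ℝ) + 1) ^ 2 * bin n (k + 1) = ((n : ℝ) - k) * (n + k + 1) * bin n k := by
  rcases lt_or_ge n k with h | h
  · rw [bin_eq_zero h, bin_eq_zero (by omega)]; simp
  obtain ⟨j, rfl⟩ := Nat.exists_eq_add_of_le h
  rcases j with _ | j
  · rw [bin_eq_zero (n := k + 0) (k := k + 1) (by omega)]; simp
  have h1 := bin_fact k (j + 1)
  have h2 := bin_fact (k + 1) j
  have hp : (0 : ℝ) < (j.factorial : ℝ) * (k.factorial : ℝ) ^ 2 := by positivity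
  apply mul_right_cancel₀ hp.ne'
  rw [show k + 1 + j + (k + 1) = (k + (j + 1) + k) + 1 by ring, Nat.factorial_succ,
    Nat.factorial_succ, show k + 1 + j = k + (j + 1) by ring] at h2
  rw [Nat.factorial_succ] at h1
  push_cast at h1 h2 ⊢
  rw [← h1] at h2
  linear_combination h2

lemma bin_rec_n (n k : ℕ) :
    ((n : ℝ) + 1 - k) * bin (n + 1) k = (n + 1 + k) * bin n k := by
  rcases lt_or_ge n k with h | h
  · rcases Nat.lt_or_ge (n + 1) k with h' | h'
    · rw [bin_eq_zero h, bin_eq_zero h']; simp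
    · have : k = n + 1 := by omega
      subst this
      rw [bin_eq_zero h]; push_cast; ring
  obtain ⟨j, rfl⟩ := Nat.exists_eq_add_of_le h
  have h1 := bin_fact k (j + 1)
  have h2 := bin_fact k j
  have hp : (0 : ℝ) < (j.factorial : ℝ) * (k.factorial : ℝ) ^ 2 := by positivity
  apply mul_right_cancel₀ hp.ne'
  rw [show k + (j + 1) + k = (k + j + k) + 1 by ring, Nat.factorial_succ,
    Nat.factorial_succ, ← add_assoc k j 1] at h1
  push_cast at h1 h2 ⊢
  rw [← h2] at h1
  linear_combination h1

lemma bin_Y2 {N k : ℕ} (h : k ≤ N) :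
    bin N (k + 1) = Y N k * ((N : ℝ) + k + 1) * (N - k) := by
  have h1 := bin_rec_k N k
  rw [bin_Y1 h] at h1
  have hp : (0 : ℝ) < ((k : ℝ) + 1) ^ 2 := by positivity
  apply mul_left_cancel₀ hp.ne'
  rw [h1]; ring

lemma bin_Y3 {N k : ℕ} (h : k ≤ N) :
    bin (N + 1) (k + 1) = Y N k * ((N : ℝ) + k + 1) * (N + k + 2) := by
  rcases h.eq_or_lt with rfl | h'
  · have h1 := bin_rec_k (k + 1) k
    have h2 := bin_rec_n k k
    rw [bin_Y1 h] at h2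
    have hp : (0 : ℝ) < ((k : ℝ) + 1) ^ 2 := by positivity
    apply mul_left_cancel₀ hp.ne'
    push_cast at h1
    rw [h1]
    linear_combination (2 * (k : ℝ) + 2) * h2
  · have h1 := bin_rec_n N (k + 1)
    rw [bin_Y2 h] at h1
    have hp : (0 : ℝ) < (N : ℝ) - k := by
      have : (k : ℝ) < N := by exact_mod_cast h'
      linarith
    apply mul_left_cancel₀ hp.ne'
    push_cast at h1
    linear_combination h1

lemma bin_Y4 {n k : ℕ} (h : k ≤ n + 1) :
    bin n (k + 1) = Y (n + 1) k * ((n : ℝ) + 1 - k) * (n - k) := by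
  have h1 := bin_rec_n n (k + 1)
  rw [bin_Y2 h] at h1
  have hp : (0 : ℝ) < (n : ℝ) + 1 + k + 1 := by positivity
  apply mul_left_cancel₀ hp.ne'
  push_cast at h1
  linear_combination -h1

/-- coefficient of the recurrence at `N = n+1` -/
noncomputable def P (n : ℕ) : ℝ :=
  34 * ((n : ℝ) + 1) ^ 3 + 51 * ((n : ℝ) + 1) ^ 2 + 27 * ((n : ℝ) + 1) + 5

noncomputable def Bc (n k : ℕ) : ℝ :=
  4 * (2 * ((n : ℝ) + 1) + 1) * (k * (2 * k + 1) - (2 * ((n : ℝ) + 1) + 1) ^ 2)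

lemma cert_b {n k : ℕ} (h : k ≤ n + 1) :
    ((n : ℝ) + 2) ^ 3 * bin (n + 2) (k + 1) ^ 2 - P n * bin (n + 1) (k + 1) ^ 2
      + ((n : ℝ) + 1) ^ 3 * bin n (k + 1) ^ 2
    = Bc n (k + 1) * bin (n + 1) (k + 1) ^ 2 - Bc n k * bin (n + 1) k ^ 2 := by
  rw [bin_Y1 h, bin_Y2 h, bin_Y3 h, bin_Y4 h]
  unfold P Bc
  push_cast
  ring

lemma rec_b (n : ℕ) :
    ((n : ℝ) + 2) ^ 3 * b (n + 2) - P n * b (n + 1) + ((n : ℝ) + 1) ^ 3 * b n = 0 := by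
  have e1 : b (n + 1) = ∑ k ∈ range (n + 2 + 1), bin (n + 1) k ^ 2 := by
    rw [sum_range_succ, bin_eq_zero (by omega)]; simp [b]
  have e0 : b n = ∑ k ∈ range (n + 2 + 1), bin n k ^ 2 := by
    rw [sum_range_succ, sum_range_succ, bin_eq_zero (by omega), bin_eq_zero (by omega)]; simp [b]
  have key : ∀ K ≤ n + 2, ∑ k ∈ range (K + 1), (((n : ℝ) + 2) ^ 3 * bin (n + 2) k ^ 2
      - P n * bin (n + 1) k ^ 2 + ((n : ℝ) + 1) ^ 3 * bin n k ^ 2)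
      = Bc n K * bin (n + 1) K ^ 2 := by
    intro K
    induction K with
    | zero => intro _; simp [bin_zero, P, Bc]; ring
    | succ K ih =>
      intro hK
      rw [sum_range_succ, ih (by omega), cert_b (by omega)]; ring
  have := key (n + 2) le_rfl
  rw [bin_eq_zero (n := n + 1) (by omega), sum_add_distrib, sum_sub_distrib, ← mul_sum, ← mul_sum,
    ← mul_sum, ← e1, ← e0] at this
  rw [show b (n + 2) = ∑ k ∈ range (n + 2 + 1), bin (n + 2) k ^ 2 from rfl]
  rw [this]; ring

lemma c_succ (n k : ℕ) :
    c n (k + 1) = c n k + (-1 : ℝ) ^ k / (2 * ((k : ℝ) + 1) ^ 3 * bin n (k + 1)) := by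
  unfold c; rw [sum_range_succ]; ring

/-- difference in `n`, in terms of `Y`; here `k ≤ n`. -/
lemma c_diff {n k : ℕ} (h : k ≤ n) :
    c (n + 1) k = c n k
      + (-1 : ℝ) ^ k / (((n : ℝ) + 1) ^ 2 * ((n : ℝ) + 1 - k) * bin (n + 1) k) := by
  induction k with
  | zero =>
    simp only [c, bin_zero, sum_range_succ, range_zero, sum_empty]
    simp only [pow_zero, add_zero, Nat.cast_zero, sub_zero, mul_one]
    congr 1
  | succ k ih =>
    rw [c_succ, c_succ, ih (by omega)]
    have h' : k ≤ n + 1 := by omega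
    rw [bin_Y1 h', bin_Y2 h', bin_Y4 h', pow_succ]
    have hY := Y_pos (n + 1) k
    have hkn : (k : ℝ) + 1 ≤ n := by exact_mod_cast h
    have h1 : (n : ℝ) - k ≠ 0 := by
      have : (0 : ℝ) < n - k := by linarith
      exact this.ne'
    have h2 : (n : ℝ) + 1 - k ≠ 0 := by
      have : (0 : ℝ) < n + 1 - k := by linarith
      exact this.ne'
    have h3 : (n : ℝ) + 1 - (k + 1) ≠ 0 := by
      have : (0 : ℝ) < n + 1 - (k + 1) := by linarith
      exact this.ne'
    have h4 : (n : ℝ) + 1 + k + 1 ≠ 0 := by positivity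
    push_cast
    field_simp
    ring

/-- `A_{N,k}` for `N = n+1`. -/
noncomputable def Ac (n k : ℕ) : ℝ :=
  Bc n k * bin (n + 1) k ^ 2 * c (n + 1) k
    - 5 * (2 * ((n : ℝ) + 1) + 1) * (-1) ^ k * k / (((n : ℝ) + 1) * (n + 2)) * bin (n + 1) k

set_option maxRecDepth 4000 in
lemma cert_a {n k : ℕ} (h : k ≤ n + 1) :
    ((n : ℝ) + 2) ^ 3 * (bin (n + 2) (k + 1) ^ 2 * c (n + 2) (k + 1))
      - P n * (bin (n + 1) (k + 1) ^ 2 * c (n + 1) (k + 1))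
      + ((n : ℝ) + 1) ^ 3 * (bin n (k + 1) ^ 2 * c n (k + 1))
    = Ac n (k + 1) - Ac n k := by
  have hY := Y_pos (n + 1) k
  have hkn : (k : ℝ) ≤ n + 1 := by exact_mod_cast h
  have E2 : bin (n + 2) (k + 1) ^ 2 * c (n + 2) (k + 1) =
      bin (n + 2) (k + 1) ^ 2 * (c (n + 1) k + (-1 : ℝ) ^ k /
        (((n : ℝ) + 2) ^ 2 * Y (n + 1) k * (n + k + 2) * (k + 1) ^ 2))
      + bin (n + 2) (k + 1) * (-1 : ℝ) ^ k / (2 * ((k : ℝ) + 1) ^ 3) := by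
    rw [c_succ, c_diff h]
    have h1 := bin_rec_n (n + 1) k
    rw [bin_Y1 h] at h1
    push_cast at h1
    have hb : 0 < bin (n + 1 + 1) (k + 1) := bin_pos (by omega)
    rw [mul_assoc, show ((n + 1 : ℕ) : ℝ) + 1 = n + 2 by push_cast; ring]
    rw [show ((n : ℝ) + 2 - k) * bin (n + 1 + 1) k
      = (n + 1 + 1 + k) * (Y (n + 1) k * (k + 1) ^ 2) by rw [← h1]; ring]
    rw [show n + 2 = n + 1 + 1 from rfl]
    generalize bin (n + 1 + 1) (k + 1) = x at *
    field_simp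
    ring
  have E1 : bin (n + 1) (k + 1) ^ 2 * c (n + 1) (k + 1) =
      bin (n + 1) (k + 1) ^ 2 * c (n + 1) k
      + bin (n + 1) (k + 1) * (-1 : ℝ) ^ k / (2 * ((k : ℝ) + 1) ^ 3) := by
    rw [c_succ]
    rcases eq_or_ne (bin (n + 1) (k + 1)) 0 with h0 | h0
    · rw [h0]; simp
    · field_simp
  have E0 : bin n (k + 1) ^ 2 * c n (k + 1) =
      bin n (k + 1) ^ 2 * c (n + 1) k
      - Y (n + 1) k * ((n : ℝ) + 1 - k) * (n - k) ^ 2 * (-1 : ℝ) ^ k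
          / (((n : ℝ) + 1) ^ 2 * (k + 1) ^ 2)
      + bin n (k + 1) * (-1 : ℝ) ^ k / (2 * ((k : ℝ) + 1) ^ 3) := by
    rcases lt_or_ge n (k + 1) with hk | hk
    · rw [bin_eq_zero hk]
      have : ((n : ℝ) + 1 - k) * (n - k) = 0 := by
        have : k = n ∨ k = n + 1 := by omega
        rcases this with rfl | rfl <;> simp
      linear_combination (Y (n + 1) k * ((n : ℝ) - k) * (-1 : ℝ) ^ k
          / (((n : ℝ) + 1) ^ 2 * (k + 1) ^ 2)) * this
    · have hb : 0 < bin n (k + 1) := bin_pos hk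
      rw [c_succ, c_diff (n := n) (k := k) (by omega), bin_Y1 h]
      have e := bin_Y4 h
      have hkn' : (k : ℝ) + 1 ≤ n := by exact_mod_cast hk
      have h2 : (n : ℝ) + 1 - k ≠ 0 := by
        have : (0 : ℝ) < n + 1 - k := by linarith
        exact this.ne'
      have h1 : (n : ℝ) - k ≠ 0 := by
        have : (0 : ℝ) < n - k := by linarith
        exact this.ne'
      rw [e]
      field_simp
      ring
  rw [E2, E0]
  unfold Ac
  rw [mul_assoc (Bc n (k + 1)), E1]
  rw [show n + 2 = n + 1 + 1 from rfl, bin_Y1 h, bin_Y2 h, bin_Y3 h, bin_Y4 h]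
  unfold P Bc
  generalize c (n + 1) k = x
  rw [pow_succ (-1 : ℝ) k]
  generalize (-1 : ℝ) ^ k = s
  push_cast
  field_simp
  ring

lemma rec_a (n : ℕ) :
    ((n : ℝ) + 2) ^ 3 * a (n + 2) - P n * a (n + 1) + ((n : ℝ) + 1) ^ 3 * a n = 0 := by
  have e1 : a (n + 1) = ∑ k ∈ range (n + 2 + 1), bin (n + 1) k ^ 2 * c (n + 1) k := by
    rw [sum_range_succ, bin_eq_zero (by omega)]; simp [a]
  have e0 : a n = ∑ k ∈ range (n + 2 + 1), bin n k ^ 2 * c n k := by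
    rw [sum_range_succ, sum_range_succ, bin_eq_zero (by omega), bin_eq_zero (by omega)]; simp [a]
  have key : ∀ K ≤ n + 2, ∑ k ∈ range (K + 1), (((n : ℝ) + 2) ^ 3 * (bin (n + 2) k ^ 2 * c (n + 2) k)
      - P n * (bin (n + 1) k ^ 2 * c (n + 1) k) + ((n : ℝ) + 1) ^ 3 * (bin n k ^ 2 * c n k))
      = Ac n K := by
    intro K
    induction K with
    | zero =>
      intro _
      have h1 := c_diff (n := n + 1) (k := 0) (by omega)
      have h0 := c_diff (n := n) (k := 0) (by omega)
      simp only [bin_zero] at h1 h0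
      rw [zero_add, sum_range_one, show n + 2 = n + 1 + 1 from rfl, h1, h0]
      unfold Ac
      simp only [bin_zero, h0]
      unfold P Bc
      push_cast
      have : (n : ℝ) + 1 + 1 ≠ 0 := by positivity
      simp only [sub_zero]
      field_simp
      ring
    | succ K ih =>
      intro hK
      rw [sum_range_succ, ih (by omega), cert_a (by omega)]; ring
  have := key (n + 2) le_rfl
  rw [sum_add_distrib, sum_sub_distrib, ← mul_sum, ← mul_sum,
    ← mul_sum, ← e1, ← e0] at this
  rw [show a (n + 2) = ∑ k ∈ range (n + 2 + 1), bin (n + 2) k ^ 2 * c (n + 2) k from rfl]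
  rw [this]
  simp [Ac, bin_eq_zero (n := n + 1) (k := n + 2) (by omega)]

lemma b_zero : b 0 = 1 := by simp [b, bin]
lemma b_one : b 1 = 5 := by simp [b, bin, sum_range_succ]; norm_num
lemma a_zero : a 0 = 0 := by simp [a, c]
lemma a_one : a 1 = 6 := by simp [a, bin, c, sum_range_succ]; norm_num

lemma b_pos (n : ℕ) : 0 < b n := by
  unfold b
  apply sum_pos
  · intro k hk
    have := bin_pos (n := n) (k := k) (by simp at hk; omega)
    positivity
  · simp

lemma casorati (n : ℕ) :
    ((n : ℝ) + 1) ^ 3 * (a (n + 1) * b n - a n * b (n + 1)) = 6 := by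
  induction n with
  | zero => simp [a_zero, b_zero, a_one]
  | succ n ih =>
    have h1 := rec_a n
    have h2 := rec_b n
    push_cast
    rw [show n + 1 + 1 = n + 2 from rfl]
    linear_combination ih + b (n + 1) * h1 - a (n + 1) * h2

lemma bin_mono (n k : ℕ) : bin n k ≤ bin (n + 1) k := by
  unfold bin
  gcongr <;> omega

lemma b_mono (n : ℕ) : b n ≤ b (n + 1) := by
  unfold b
  rw [sum_range_succ _ (n + 1)]
  have : ∑ k ∈ range (n + 1), bin n k ^ 2 ≤ ∑ k ∈ range (n + 1), bin (n + 1) k ^ 2 := by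
    apply sum_le_sum
    intro k hk
    have := bin_pos (n := n) (k := k) (by simp at hk; omega)
    have := bin_mono n k
    gcongr
  have h2 : 0 ≤ bin (n + 1) (n + 1) ^ 2 := sq_nonneg _
  linarith

lemma b_growth {n : ℕ} (h : 51 ≤ n) : 32 * b n ≤ b (n + 1) := by
  obtain ⟨m, rfl⟩ := Nat.exists_eq_add_of_le h
  have h1 := rec_b (50 + m)
  have h2 := b_mono (50 + m)
  have h3 := b_pos (50 + m + 1)
  rw [show 51 + m = 50 + m + 1 by ring]
  rw [show 50 + m + 1 + 1 = 50 + m + 2 by ring]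
  have hm : (0 : ℝ) ≤ m := by positivity
  have hp : (0 : ℝ) < ((50 + m : ℕ) + 2 : ℝ) ^ 3 := by positivity
  refine le_of_mul_le_mul_left ?_ hp
  have h4 : (((50 + m : ℕ) : ℝ) + 1) ^ 3 * b (50 + m)
      ≤ (((50 + m : ℕ) : ℝ) + 1) ^ 3 * b (50 + m + 1) := by gcongr
  have h5 : 0 ≤ (P (50 + m) - (((50 + m : ℕ) : ℝ) + 1) ^ 3
      - 32 * (((50 + m : ℕ) : ℝ) + 2) ^ 3) * b (50 + m + 1) := by
    apply mul_nonneg _ h3.le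
    unfold P
    push_cast
    ring_nf
    positivity
  linarith

lemma b_lower : ∃ C : ℝ, 0 < C ∧ ∀ n, 51 ≤ n → C * 32 ^ n ≤ b n := by
  refine ⟨b 51 / 32 ^ 51, by have := b_pos 51; positivity, ?_⟩
  intro n hn
  induction n, hn using Nat.le_induction with
  | base => field_simp; exact le_rfl
  | succ n hn ih =>
    have := b_growth hn
    rw [pow_succ _ n]
    linarith

lemma summable_cubes : Summable (fun i : ℕ => 1 / ((i : ℝ) + 1) ^ 3) := by
  have := (summable_nat_add_iff (f := fun i : ℕ => 1 / (i : ℝ) ^ 3) 1).2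
    (Real.summable_one_div_nat_pow.2 (by norm_num))
  simpa using this

lemma c_close {n k : ℕ} (hk : k ≤ n) :
    |c n k - ∑ m ∈ range n, 1 / ((m : ℝ) + 1) ^ 3| ≤ zeta3 * (1 / ((n : ℝ) + 1)) := by
  unfold c
  rw [add_sub_cancel_left]
  calc _ ≤ ∑ m ∈ range k, |(-1 : ℝ) ^ m / (2 * ((m : ℝ) + 1) ^ 3 * bin n (m + 1))| :=
        abs_sum_le_sum_abs _ _
    _ ≤ ∑ m ∈ range k, 1 / ((m : ℝ) + 1) ^ 3 * (1 / ((n : ℝ) + 1)) := by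
        apply sum_le_sum
        intro m hm
        have hm' : m + 1 ≤ n := by simp at hm; omega
        have hb := bin_pos hm'
        have hb' : (n : ℝ) + 1 ≤ bin n (m + 1) := by
          have h1 : 1 ≤ n.choose (m + 1) := Nat.choose_pos hm'
          have h2 : n + 1 ≤ (n + (m + 1)).choose (m + 1) := by
            calc n + 1 = (n + 1).choose n := by simp
              _ ≤ (n + (m + 1)).choose n := Nat.choose_le_choose _ (by omega)
              _ = _ := Nat.choose_symm_add
          have h3 : n + 1 ≤ n.choose (m + 1) * (n + (m + 1)).choose (m + 1) := by nlinarith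
          unfold bin
          exact_mod_cast h3
        rw [abs_div, abs_pow, abs_neg, abs_one, one_pow, abs_of_pos (by positivity),
          one_div_mul_one_div]
        apply one_div_le_one_div_of_le (by positivity)
        have : (0 : ℝ) < ((m : ℝ) + 1) ^ 3 := by positivity
        nlinarith
    _ = (∑ m ∈ range k, 1 / ((m : ℝ) + 1) ^ 3) * (1 / ((n : ℝ) + 1)) := by rw [sum_mul]
    _ ≤ _ := by
        gcongr
        exact summable_cubes.sum_le_tsum _ (fun i _ => by positivity)

lemma tendsto_ratio : Filter.Tendsto (fun n => a n / b n) Filter.atTop (nhds zeta3) := by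
  have h1 : Filter.Tendsto (fun n : ℕ => ∑ m ∈ range n, 1 / ((m : ℝ) + 1) ^ 3) Filter.atTop
      (nhds zeta3) := summable_cubes.hasSum.tendsto_sum_nat
  have h2 : Filter.Tendsto (fun n : ℕ => zeta3 * (1 / ((n : ℝ) + 1))) Filter.atTop (nhds 0) := by
    simpa using (tendsto_one_div_add_atTop_nhds_zero_nat (𝕜 := ℝ)).const_mul zeta3
  have h3 : Filter.Tendsto (fun n : ℕ => a n / b n - ∑ m ∈ range n, 1 / ((m : ℝ) + 1) ^ 3)
      Filter.atTop (nhds 0) := by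
    apply squeeze_zero_norm _ h2
    intro n
    have hb := b_pos n
    rw [Real.norm_eq_abs]
    set H := ∑ m ∈ range n, 1 / ((m : ℝ) + 1) ^ 3 with hH
    have e : a n / b n - H = (∑ k ∈ range (n + 1), bin n k ^ 2 * (c n k - H)) / b n := by
      rw [div_sub' hb.ne']
      congr 1
      simp only [mul_sub, sum_sub_distrib]
      rw [← sum_mul]; rfl
    rw [e, abs_div, abs_of_pos hb, div_le_iff₀ hb]
    refine (abs_sum_le_sum_abs _ _).trans ?_
    rw [b, mul_sum]
    apply sum_le_sum
    intro k hk
    rw [abs_mul, abs_of_nonneg (sq_nonneg _), mul_comm]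
    gcongr
    exact c_close (by simp at hk; omega)
  simpa using h3.add h1

lemma ratio_step (n : ℕ) :
    a (n + 1) / b (n + 1) = a n / b n + 6 / (((n : ℝ) + 1) ^ 3 * b (n + 1) * b n) := by
  have h := casorati n
  have h1 := b_pos n
  have h2 := b_pos (n + 1)
  field_simp
  linear_combination h

lemma err_pos (n : ℕ) : 0 < b n * zeta3 - a n := by
  have hs : StrictMono (fun n => a n / b n) := by
    apply strictMono_nat_of_lt_succ
    intro n
    rw [ratio_step]
    have h1 := b_pos n
    have h2 := b_pos (n + 1)
    have : 0 < 6 / (((n : ℝ) + 1) ^ 3 * b (n + 1) * b n) := by positivity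
    linarith
  have h1 := hs.monotone.ge_of_tendsto tendsto_ratio (n + 1)
  have h2 := hs (Nat.lt_succ_self n)
  have h3 : a n / b n < zeta3 := lt_of_lt_of_le h2 h1
  rw [div_lt_iff₀ (b_pos n)] at h3
  linarith

lemma err_le {n : ℕ} (hn : 51 ≤ n) : b n * zeta3 - a n ≤ 1 / b n := by
  have hb := b_pos n
  have key : ∀ N, n ≤ N → a N / b N + 1 / b N ^ 2 ≤ a n / b n + 1 / b n ^ 2 := by
    intro N hN
    induction N, hN using Nat.le_induction with
    | base => exact le_rfl
    | succ N hN ih =>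
      refine le_trans ?_ ih
      rw [ratio_step]
      have h1 := b_pos N
      have h2 := b_pos (N + 1)
      have h3 := b_growth (hn.trans hN)
      have e1 : 6 / (((N : ℝ) + 1) ^ 3 * b (N + 1) * b N) ≤ 6 / (32 * b N ^ 2) := by
        apply div_le_div_of_nonneg_left (by norm_num) (by positivity)
        have : (1 : ℝ) ≤ ((N : ℝ) + 1) ^ 3 := by
          apply one_le_pow₀
          have : (0 : ℝ) ≤ N := by positivity
          linarith
        calc 32 * b N ^ 2 = 1 * (32 * b N) * b N := by ring
          _ ≤ _ := by gcongr
      have e2 : 1 / b (N + 1) ^ 2 ≤ 1 / (32 * b N) ^ 2 := by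
        apply one_div_le_one_div_of_le (by positivity)
        gcongr
      have e3 : 6 / (32 * b N ^ 2) + 1 / (32 * b N) ^ 2 ≤ 1 / b N ^ 2 := by
        have : 1 / b N ^ 2 - (6 / (32 * b N ^ 2) + 1 / (32 * b N) ^ 2)
            = (831 / 1024) / b N ^ 2 := by field_simp; norm_num
        have : 0 ≤ (831 / 1024) / b N ^ 2 := by positivity
        linarith
      linarith
  have h : zeta3 ≤ a n / b n + 1 / b n ^ 2 := by
    apply le_of_tendsto tendsto_ratio
    filter_upwards [Filter.eventually_ge_atTop n] with N hN
    have := key N hN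
    have : 0 ≤ 1 / b N ^ 2 := by positivity
    linarith
  have h2 : b n * zeta3 ≤ b n * (a n / b n + 1 / b n ^ 2) := by gcongr
  have h3 : b n * (a n / b n + 1 / b n ^ 2) = a n + 1 / b n := by field_simp
  linarith

/-- being an integer -/
def IsI (x : ℝ) : Prop := ∃ z : ℤ, x = z

lemma IsI.add {x y : ℝ} (hx : IsI x) (hy : IsI y) : IsI (x + y) := by
  obtain ⟨u, rfl⟩ := hx; obtain ⟨v, rfl⟩ := hy; exact ⟨u + v, by push_cast; rfl⟩
lemma IsI.sub {x y : ℝ} (hx : IsI x) (hy : IsI y) : IsI (x - y) := by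
  obtain ⟨u, rfl⟩ := hx; obtain ⟨v, rfl⟩ := hy; exact ⟨u - v, by push_cast; rfl⟩
lemma IsI.mul {x y : ℝ} (hx : IsI x) (hy : IsI y) : IsI (x * y) := by
  obtain ⟨u, rfl⟩ := hx; obtain ⟨v, rfl⟩ := hy; exact ⟨u * v, by push_cast; rfl⟩
lemma IsI.pow {x : ℝ} (hx : IsI x) (k : ℕ) : IsI (x ^ k) := by
  obtain ⟨u, rfl⟩ := hx; exact ⟨u ^ k, by push_cast; rfl⟩
lemma IsI.nat (n : ℕ) : IsI (n : ℝ) := ⟨n, by simp⟩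
lemma IsI.sum {s : Finset ℕ} {f : ℕ → ℝ} (h : ∀ i ∈ s, IsI (f i)) : IsI (∑ i ∈ s, f i) := by
  induction s using Finset.induction_on with
  | empty => exact ⟨0, by simp⟩
  | insert i s hi ih =>
    rw [sum_insert hi]
    exact (h i (by simp)).add (ih fun j hj => h j (by simp [hj]))
lemma IsI.div {m D : ℕ} (h : m ∣ D) : IsI ((D : ℝ) / m) := by
  obtain ⟨e, rfl⟩ := h
  rcases Nat.eq_zero_or_pos m with rfl | hm
  · exact ⟨0, by simp⟩
  · exact ⟨e, by push_cast; field_simp⟩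

lemma bin_int (n k : ℕ) : IsI (bin n k) := (IsI.nat _).mul (IsI.nat _)

lemma leibniz (D : ℕ) (m : ℕ) : ∀ n, m + 1 ≤ n → (∀ i, 1 ≤ i → i ≤ n → i ∣ D) →
    IsI ((D : ℝ) / (((m : ℝ) + 1) * (n.choose (m + 1) : ℝ))) := by
  induction m with
  | zero =>
    intro n hn hD
    simpa using IsI.div (hD n hn le_rfl)
  | succ m ih =>
    intro n hn hD
    obtain ⟨n, rfl⟩ : ∃ n', n = n' + 1 := ⟨n - 1, by omega⟩
    have h1 := ih n (by omega) (fun i h1 h2 => hD i h1 (by omega))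
    have h2 := ih (n + 1) (by omega) hD
    have h3 := h1.sub h2
    convert h3 using 1
    -- binomial identities
    have p1 : 0 < n.choose (m + 1) := Nat.choose_pos (by omega)
    have p2 : 0 < (n + 1).choose (m + 1) := Nat.choose_pos (by omega)
    have p3 : 0 < (n + 1).choose (m + 1 + 1) := Nat.choose_pos (by omega)
    have q1 : ((n + 1).choose (m + 1 + 1) : ℝ) * (m + 2) = (n + 1) * n.choose (m + 1) := by
      have := Nat.add_one_mul_choose_eq n (m + 1)
      have h : ((n : ℝ) + 1) * n.choose (m + 1) = (n + 1).choose (m + 1 + 1) * (m + 1 + 1) := by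
        exact_mod_cast this
      linear_combination -h
    have q2 : ((n + 1).choose (m + 1) : ℝ) * (n - m) = (n + 1) * n.choose (m + 1) := by
      have := Nat.choose_mul_succ_eq n (m + 1)
      have h : (n.choose (m + 1) : ℝ) * (n + 1) = (n + 1).choose (m + 1) * (n + 1 - (m + 1) : ℕ) := by
        exact_mod_cast this
      rw [Nat.cast_sub (by omega)] at h
      push_cast at h
      linear_combination -h
    push_cast
    have hnm : (0 : ℝ) < n - m := by
      have : (m : ℝ) + 1 ≤ n := by exact_mod_cast (by omega : m + 1 ≤ n)
      linarith
    have r1 : ((n + 1).choose (m + 1 + 1) : ℝ) = (n + 1) * n.choose (m + 1) / (m + 2) := by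
      rw [← q1]; field_simp
    have r2 : ((n + 1).choose (m + 1) : ℝ) = (n + 1) * n.choose (m + 1) / (n - m) := by
      rw [← q2]; field_simp
    rw [r1, r2]
    have : (m : ℝ) + 1 + 1 ≠ 0 := by positivity
    have : (0 : ℝ) < (n.choose (m + 1) : ℝ) := by exact_mod_cast p1
    field_simp
    ring

lemma choose_quot {n k M : ℕ} (h : M ≤ k) :
    (n + M).choose M * (n + k).choose (k - M) = (n + k).choose k * k.choose M := by
  have h1 := Nat.choose_mul (n := n + k) (k := n + M) (s := n) (by omega)
  rw [show n + k - n = k by omega, show n + M - n = M by omega] at h1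
  rw [Nat.choose_symm_add, Nat.choose_symm_add] at h1
  have h2 : (n + k).choose (k - M) = (n + k).choose (n + M) := by
    apply Nat.choose_symm_of_eq_add; omega
  rw [h2, mul_comm, h1]

lemma a_int (n D : ℕ) (hD : ∀ i, 1 ≤ i → i ≤ n → i ∣ D) : IsI (2 * (D : ℝ) ^ 3 * a n) := by
  unfold a
  rw [mul_sum]
  apply IsI.sum
  intro k hk
  have hk : k ≤ n := by simp at hk; omega
  unfold c
  rw [show ∀ x y z w : ℝ, 2 * x * (y * (z + w)) = 2 * y * (x * z) + y * (2 * x * w) by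
    intros; ring]
  apply IsI.add
  · apply IsI.mul ((IsI.nat 2).mul ((bin_int n k).pow 2))
    rw [mul_sum]
    apply IsI.sum
    intro m hm
    have := (IsI.div (hD (m + 1) (by omega) (by simp at hm; omega))).pow 3
    rw [div_pow] at this
    push_cast at this
    rwa [mul_one_div]
  · rw [mul_sum, mul_sum]
    apply IsI.sum
    intro m hm
    have hm : m + 1 ≤ k := by simp at hm; omega
    have i1 := IsI.div (hD (m + 1) (by omega) (by omega))
    have i2 := leibniz D m n (by omega) hD
    have i3 := leibniz D m k (by omega) (fun i h1 h2 => hD i h1 (by omega))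
    have i4 : IsI (bin n k * n.choose k * ((n + k).choose (k - (m + 1)) : ℕ) * (-1) ^ m) :=
      (((bin_int n k).mul (IsI.nat _)).mul (IsI.nat _)).mul (IsI.pow ⟨-1, by simp⟩ m)
    have := ((i1.mul i2).mul i3).mul i4
    convert this using 1
    have hq : ((n + (m + 1)).choose (m + 1) : ℝ) * (n + k).choose (k - (m + 1))
      = (n + k).choose k * k.choose (m + 1) := by exact_mod_cast choose_quot (n := n) hm
    have p1 : (0 : ℝ) < n.choose (m + 1) := by exact_mod_cast Nat.choose_pos (by omega)
    have p2 : (0 : ℝ) < k.choose (m + 1) := by exact_mod_cast Nat.choose_pos (by omega)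
    have p3 : (0 : ℝ) < (n + (m + 1)).choose (m + 1) := by
      exact_mod_cast Nat.choose_pos (by omega)
    unfold bin
    push_cast
    field_simp
    linear_combination (-((n.choose k : ℝ) ^ 2 * ((n + k).choose k : ℝ) * (D : ℝ) ^ 3)) * hq

lemma b_int (n : ℕ) : IsI (b n) := IsI.sum fun _ _ => (bin_int _ _).pow 2

open ArithmeticFunction in
lemma log_fact (N : ℕ) (n : ℕ) (h : n ≤ N) :
    Real.log (n.factorial : ℝ) = ∑ d ∈ Icc 1 N, vonMangoldt d * ((n / d : ℕ) : ℝ) := by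
  induction n with
  | zero => simp
  | succ n ih =>
    have e : ∀ d, ((((n + 1) / d : ℕ)) : ℝ) = ((n / d : ℕ) : ℝ) + if d ∣ n + 1 then 1 else 0 := by
      intro d
      rw [Nat.succ_div]; push_cast; rfl
    simp only [e, mul_add, sum_add_distrib]
    rw [← ih (by omega), Nat.factorial_succ]
    push_cast
    rw [Real.log_mul (by positivity) (by positivity), add_comm]
    congr 1
    have := vonMangoldt_sum (n := n + 1)
    push_cast at this
    rw [← this]
    simp only [mul_ite, mul_one, mul_zero]
    rw [← sum_filter]
    apply sum_congr _ (fun _ _ => rfl)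
    ext d
    simp only [Nat.mem_divisors, mem_filter, mem_Icc]
    constructor
    · rintro ⟨h1, _⟩
      exact ⟨⟨Nat.pos_of_dvd_of_pos h1 (by omega), (Nat.le_of_dvd (by omega) h1).trans h⟩, h1⟩
    · rintro ⟨_, h1⟩
      exact ⟨h1, by omega⟩

lemma div_ineq (q : ℕ) : q / 2 + q / 3 + q / 7 + q / 42 + (if 1 ≤ q ∧ q < 42 then 1 else 0) ≤ q := by
  split_ifs with h
  · obtain ⟨h1, h2⟩ := h
    interval_cases q <;> decide
  · omega

open ArithmeticFunction in
lemma psi_step (n : ℕ) :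
    Chebyshev.psi n ≤ Chebyshev.psi ((n / 42 : ℕ) : ℝ) + (Real.log (n.factorial : ℝ)
      - Real.log ((n / 2).factorial : ℝ) - Real.log ((n / 3).factorial : ℝ)
      - Real.log ((n / 7).factorial : ℝ) - Real.log ((n / 42).factorial : ℝ)) := by
  have hd : ∀ k, n / k ≤ n := fun k => Nat.div_le_self _ _
  rw [log_fact n n le_rfl, log_fact n _ (hd 2), log_fact n _ (hd 3), log_fact n _ (hd 7),
    log_fact n _ (hd 42)]
  have hpsi : Chebyshev.psi n = ∑ d ∈ Icc 1 n, vonMangoldt d := by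
    unfold Chebyshev.psi; rw [Nat.floor_natCast]; rfl
  have hpsi' : Chebyshev.psi ((n / 42 : ℕ) : ℝ)
      = ∑ d ∈ Icc 1 n, vonMangoldt d * (if d ≤ n / 42 then 1 else 0) := by
    unfold Chebyshev.psi; rw [Nat.floor_natCast]
    simp only [mul_ite, mul_one, mul_zero]
    rw [← sum_filter]
    apply sum_congr _ (fun _ _ => rfl)
    ext d
    have := hd 42
    simp only [mem_Ioc, mem_filter, mem_Icc]
    omega
  rw [hpsi, hpsi', ← sum_sub_distrib, ← sum_sub_distrib, ← sum_sub_distrib, ← sum_sub_distrib,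
    ← sum_add_distrib]
  apply sum_le_sum
  intro d hdm
  simp only [mem_Icc] at hdm
  have hL : 0 ≤ vonMangoldt d := vonMangoldt_nonneg
  rw [← mul_sub, ← mul_sub, ← mul_sub, ← mul_sub, ← mul_add]
  apply le_mul_of_one_le_right hL
  rw [Nat.div_right_comm n 2 d, Nat.div_right_comm n 3 d, Nat.div_right_comm n 7 d,
    Nat.div_right_comm n 42 d]
  have h1 := div_ineq (n / d)
  have h2 : 1 ≤ n / d := (Nat.one_le_div_iff (by omega)).2 hdm.2
  have h3 : n / d < 42 ∨ d ≤ n / 42 := by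
    rcases Nat.lt_or_ge (n / d) 42 with h | h
    · exact Or.inl h
    · right
      have h' := (Nat.le_div_iff_mul_le (by omega)).1 h
      rw [Nat.le_div_iff_mul_le (by omega)]
      linarith
  have h4 : n / d / 2 + n / d / 3 + n / d / 7 + n / d / 42 + 1
      ≤ n / d + (if d ≤ n / 42 then 1 else 0) := by
    split_ifs at h1 ⊢ <;> omega
  have h5 : ((n / d / 2 : ℕ) : ℝ) + ((n / d / 3 : ℕ) : ℝ) + ((n / d / 7 : ℕ) : ℝ)
      + ((n / d / 42 : ℕ) : ℝ) + 1 ≤ ((n / d : ℕ) : ℝ) + (if d ≤ n / 42 then 1 else 0) := by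
    exact_mod_cast h4
  linarith

lemma fact_upper {n : ℕ} (h : 1 ≤ n) :
    Real.log (n.factorial : ℝ) ≤ n * Real.log n - n + Real.log n + 1 := by
  induction n, h using Nat.le_induction with
  | base => simp
  | succ n hn ih =>
    have hn0 : (0 : ℝ) < n := by exact_mod_cast hn
    rw [Nat.factorial_succ]
    push_cast
    rw [Real.log_mul (by positivity) (by positivity)]
    have h1 := Real.one_sub_inv_le_log_of_pos (x := ((n : ℝ) + 1) / n) (by positivity)
    rw [Real.log_div (by positivity) (by positivity)] at h1
    have h2 : ((n : ℝ) + 1) * (1 - (((n : ℝ) + 1) / n)⁻¹)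
        ≤ ((n : ℝ) + 1) * (Real.log (n + 1) - Real.log n) := by gcongr
    have h3 : ((n : ℝ) + 1) * (1 - (((n : ℝ) + 1) / n)⁻¹) = 1 := by field_simp; ring
    nlinarith

lemma fact_lower {n : ℕ} (h : 1 ≤ n) : n * Real.log n - n ≤ Real.log (n.factorial : ℝ) := by
  have h1 := Stirling.le_log_factorial_stirling (n := n) (by omega)
  have h2 : 0 ≤ Real.log n := Real.log_nonneg (by exact_mod_cast h)
  have h3 : 0 ≤ Real.log (2 * Real.pi) := Real.log_nonneg (by linarith [Real.pi_gt_three])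
  linarith

lemma fact_floor_lower {n k : ℕ} (hk : 2 ≤ k) (hn : k ≤ n) :
    (n : ℝ) / k * (Real.log n - Real.log k) - (n : ℝ) / k - Real.log n
      ≤ Real.log ((n / k).factorial : ℝ) := by
  set q := n / k with hq
  have hk0 : (0 : ℝ) < k := by exact_mod_cast (by omega : 0 < k)
  have hn0 : (0 : ℝ) < n := by exact_mod_cast (by omega : 0 < n)
  have h1 := fact_lower (n := q + 1) (Nat.le_add_left 1 q)
  rw [Nat.factorial_succ] at h1
  push_cast at h1
  rw [Real.log_mul (by positivity) (by positivity)] at h1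
  have hqn : q + 1 ≤ n := by
    have : q < n := Nat.div_lt_self (by omega) (by omega)
    omega
  have h2 : Real.log ((q : ℝ) + 1) ≤ Real.log n := by
    apply Real.log_le_log (by positivity)
    exact_mod_cast hqn
  have hx : (n : ℝ) / k ≤ q + 1 := by
    rw [div_le_iff₀ hk0]
    have : n < (q + 1) * k := by
      rw [hq, ← Nat.div_lt_iff_lt_mul (by omega)]; exact Nat.lt_succ_self _
    exact_mod_cast this.le
  have hx1 : 1 ≤ (n : ℝ) / k := by
    rw [le_div_iff₀ hk0]; simpa using (by exact_mod_cast hn : (k : ℝ) ≤ n)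
  rw [← Real.log_div hn0.ne' hk0.ne']
  set x := (n : ℝ) / k
  have hx0 : 0 < x := by linarith
  set y := (q : ℝ) + 1
  have hy0 : 0 < y := by linarith
  have h3 := Real.one_sub_inv_le_log_of_pos (x := y / x) (by positivity)
  rw [Real.log_div hy0.ne' hx0.ne'] at h3
  have h4 : y * (1 - (y / x)⁻¹) ≤ y * (Real.log y - Real.log x) := by gcongr
  have h5 : y * (1 - (y / x)⁻¹) = y - x := by field_simp
  have h6 : 0 ≤ (y - x) * Real.log x := mul_nonneg (by linarith) (Real.log_nonneg hx1)
  nlinarith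

lemma psi_step' {n : ℕ} (hn : 42 ≤ n) :
    Chebyshev.psi n ≤ Chebyshev.psi ((n / 42 : ℕ) : ℝ) + 1.09 * n + (5 * Real.log n + 1) := by
  have h0 := psi_step n
  have h1 := fact_upper (n := n) (by omega)
  have h2 := fact_floor_lower (n := n) (k := 2) (by omega) (by omega)
  have h3 := fact_floor_lower (n := n) (k := 3) (by omega) (by omega)
  have h7 := fact_floor_lower (n := n) (k := 7) (by omega) (by omega)
  have h42 := fact_floor_lower (n := n) (k := 42) (by omega) (by omega)
  push_cast at h2 h3 h7 h42
  have l2 := Real.log_two_lt_d9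
  have l3 : 5 * Real.log 3 ≤ 8 * Real.log 2 := by
    have : Real.log ((3 : ℝ) ^ 5) ≤ Real.log ((2 : ℝ) ^ 8) :=
      Real.log_le_log (by norm_num) (by norm_num)
    rw [Real.log_pow, Real.log_pow] at this
    exact_mod_cast this
  have l7 : 6 * Real.log 7 ≤ 17 * Real.log 2 := by
    have : Real.log ((7 : ℝ) ^ 6) ≤ Real.log ((2 : ℝ) ^ 17) :=
      Real.log_le_log (by norm_num) (by norm_num)
    rw [Real.log_pow, Real.log_pow] at this
    exact_mod_cast this
  have l42 : Real.log 42 = Real.log 2 + Real.log 3 + Real.log 7 := by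
    rw [← Real.log_mul (by norm_num) (by norm_num), ← Real.log_mul (by norm_num) (by norm_num)]
    norm_num
  have hA : Real.log 2 / 2 + Real.log 3 / 3 + Real.log 7 / 7 + Real.log 42 / 42 ≤ 1.09 := by
    rw [l42]; linarith
  have hn0 : (0 : ℝ) ≤ n := by positivity
  have hB := mul_le_mul_of_nonneg_left hA hn0
  linarith

lemma psi_bound : ∃ C : ℝ, ∀ n : ℕ, Chebyshev.psi n ≤ 1.15 * n + C := by
  have hl : ∀ᶠ n : ℕ in Filter.atTop, 5 * Real.log n + 1 ≤ 0.02 * n := by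
    have h1 : ∀ᶠ x : ℝ in Filter.atTop, ‖Real.log x‖ ≤ 0.002 * ‖x‖ :=
      Real.isLittleO_log_id_atTop.bound (by norm_num)
    have h2 := tendsto_natCast_atTop_atTop (R := ℝ) |>.eventually h1
    filter_upwards [h2, Filter.eventually_ge_atTop 1000] with n hn hn2
    have h3 : (1000 : ℝ) ≤ n := by exact_mod_cast hn2
    have h4 := le_abs_self (Real.log n)
    simp only [Real.norm_eq_abs] at hn
    rw [abs_of_nonneg (a := (n : ℝ)) (by positivity)] at hn
    linarith
  obtain ⟨N, hN⟩ := Filter.eventually_atTop.1 hl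
  refine ⟨Chebyshev.psi ((N + 42 : ℕ) : ℝ), fun n => ?_⟩
  induction n using Nat.strong_induction_on with
  | _ n ih =>
    have hn0 : (0 : ℝ) ≤ n := by positivity
    rcases Nat.lt_or_ge n (N + 42) with h | h
    · have : Chebyshev.psi n ≤ Chebyshev.psi ((N + 42 : ℕ) : ℝ) :=
        Chebyshev.psi_mono (by exact_mod_cast h.le)
      linarith
    · have h1 := psi_step' (n := n) (by omega)
      have h2 := ih (n / 42) (Nat.div_lt_self (by omega) (by omega))
      have h3 := hN n (by omega)
      have h4 : ((n / 42 : ℕ) : ℝ) ≤ (n : ℝ) / 42 := by exact_mod_cast Nat.cast_div_le (α := ℝ)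
      linarith

end Apery

open Apery in
/-- The real number ζ(3) is irrational: no rational number equals it. -/
theorem zeta_3_irrational : ¬ ∃ r : ℚ, zeta3 = (r : ℝ) := by
  rintro ⟨r, hr⟩
  obtain ⟨C, hC⟩ := psi_bound
  obtain ⟨c₀, hc0, hc⟩ := b_lower
  have hq : (0 : ℝ) < r.den := by exact_mod_cast r.den_pos
  have hzq : zeta3 * r.den = r.num := by
    rw [hr]; exact_mod_cast Rat.mul_den_eq_num r
  -- lower bound for the integer
  have low : ∀ n, 51 ≤ n → 1 ≤ 2 * r.den * Real.exp (3 * C) / c₀ * (Real.exp 3.45 / 32) ^ n := by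
    intro n hn
    set D := Nat.lcmUpto n with hDdef
    have hDpos : (0 : ℝ) < D := by exact_mod_cast Nat.lcmUpto_pos n
    have hD : ∀ i, 1 ≤ i → i ≤ n → i ∣ D := by
      intro i h1 h2
      exact Finset.dvd_lcm (f := id) (Finset.mem_Icc.2 ⟨h1, h2⟩)
    have hDle : (D : ℝ) ^ 3 ≤ Real.exp (3 * C) * Real.exp 3.45 ^ n := by
      have h1 := hC n
      rw [Chebyshev.psi_eq_log_lcmUpto, Real.log_le_iff_le_exp hDpos] at h1
      calc (D : ℝ) ^ 3 ≤ Real.exp (1.15 * n + C) ^ 3 := by gcongr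
        _ = _ := by
          rw [← Real.exp_nat_mul, ← Real.exp_nat_mul, ← Real.exp_add]
          congr 1
          push_cast
          ring
    have hint : IsI (2 * (D : ℝ) ^ 3 * r.den * (b n * zeta3 - a n)) := by
      have i1 := a_int n D hD
      have i2 := b_int n
      have i3 : IsI (2 * (D : ℝ) ^ 3 * b n * r.num) :=
        ((((IsI.nat 2).mul ((IsI.nat D).pow 3))).mul i2).mul ⟨_, rfl⟩
      have := i3.sub ((IsI.nat r.den).mul i1)
      convert this using 1
      rw [← hzq]; ring
    have hpos := err_pos n
    have hle := err_le hn
    have hb := b_pos n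
    have hX : 0 < 2 * (D : ℝ) ^ 3 * r.den * (b n * zeta3 - a n) := by positivity
    have h1 : 1 ≤ 2 * (D : ℝ) ^ 3 * r.den * (b n * zeta3 - a n) := by
      obtain ⟨z, hz⟩ := hint
      rw [hz] at hX ⊢
      have : 0 < z := by exact_mod_cast hX
      exact_mod_cast this
    calc 1 ≤ 2 * (D : ℝ) ^ 3 * r.den * (b n * zeta3 - a n) := h1
      _ ≤ 2 * (Real.exp (3 * C) * Real.exp 3.45 ^ n) * r.den * (1 / (c₀ * 32 ^ n)) := by
        have : 1 / b n ≤ 1 / (c₀ * 32 ^ n) :=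
          one_div_le_one_div_of_le (by positivity) (hc n hn)
        have := hle.trans this
        gcongr
      _ = _ := by rw [div_pow]; field_simp
  have hlt : Real.exp 3.45 / 32 < 1 := by
    rw [div_lt_one (by norm_num), ← Real.lt_log_iff_exp_lt (by norm_num)]
    have : Real.log 32 = 5 * Real.log 2 := by
      rw [show (32 : ℝ) = 2 ^ 5 by norm_num, Real.log_pow]; norm_num
    rw [this]
    have := Real.log_two_gt_d9
    linarith
  have ht := (tendsto_pow_atTop_nhds_zero_of_lt_one (by positivity) hlt).const_mul
    (2 * r.den * Real.exp (3 * C) / c₀)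
  rw [mul_zero] at ht
  have := ge_of_tendsto ht (Filter.eventually_atTop.2 ⟨51, low⟩)
  linarith
end

section
/- Both sequences (a_n) and (b_n) satisfy, for all n ≥ 0, the second-order recurrence (n+2)³·y_{n+2} − (17n²+51n+39)·(2n+3)·y_{n+1} + (n+1)³·y_n = 0. -/
/-- `z n = ∑_{m=1}^n 1/m³`. -/
def zseq (n : ℕ) : ℚ := ∑ m ∈ Finset.Icc 1 n, 1 / (m : ℚ) ^ 3

/-- `a n = ∑_{k=0}^n C(n,k)² C(n+k,k)²`. -/
def aseq (n : ℕ) : ℚ :=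
  ∑ k ∈ Finset.range (n + 1), (n.choose k : ℚ) ^ 2 * ((n + k).choose k : ℚ) ^ 2

/-- `b n = a n * z n + ∑_{k=1}^n ∑_{m=1}^k (-1)^{m+1} C(n,k)² C(n+k,k)²
      / (2 m³ C(n,m) C(n+m,m))`. -/
def bseq (n : ℕ) : ℚ :=
  aseq n * zseq n +
    ∑ k ∈ Finset.Icc 1 n, ∑ m ∈ Finset.Icc 1 k,
      (-1 : ℚ) ^ (m + 1) * (n.choose k : ℚ) ^ 2 * ((n + k).choose k : ℚ) ^ 2 /
        (2 * (m : ℚ) ^ 3 * (n.choose m : ℚ) * ((n + m).choose m : ℚ))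

/-- `T n k = C(n,k) C(n+k,k)`. -/
def aperyT (n k : ℕ) : ℚ := (n.choose k : ℚ) * ((n + k).choose k : ℚ)

/-- The Apery numbers `c n k`. -/
def aperyC (n k : ℕ) : ℚ :=
  zseq n + ∑ m ∈ Finset.Icc 1 k, (-1 : ℚ) ^ (m + 1) / (2 * (m : ℚ) ^ 3 * aperyT n m)

lemma aperyT_pos {n k : ℕ} (h : k ≤ n) : 0 < aperyT n k := by
  unfold aperyT
  have h1 : 0 < n.choose k := Nat.choose_pos h
  have h2 : 0 < (n + k).choose k := Nat.choose_pos (by omega)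
  positivity

lemma aperyT_zero {n k : ℕ} (h : n < k) : aperyT n k = 0 := by
  simp [aperyT, Nat.choose_eq_zero_of_lt h]

lemma aperyT_k0 (n : ℕ) : aperyT n 0 = 1 := by simp [aperyT]

lemma aperyT_fact (k j : ℕ) :
    aperyT (k + j) k * ((k.factorial : ℚ) ^ 2 * j.factorial) = (2 * k + j).factorial := by
  have h1 : ((k + j).choose k : ℚ) * k.factorial * j.factorial = (k + j).factorial := by
    have := Nat.choose_mul_factorial_mul_factorial (show k ≤ k + j by omega)
    rw [Nat.add_sub_cancel_left] at this
    exact_mod_cast this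
  have h2 : ((k + j + k).choose k : ℚ) * k.factorial * (k + j).factorial
      = (2 * k + j).factorial := by
    have := Nat.choose_mul_factorial_mul_factorial (show k ≤ k + j + k by omega)
    rw [Nat.add_sub_cancel, show k + j + k = 2 * k + j by ring] at this
    rw [show k + j + k = 2 * k + j by ring]
    exact_mod_cast this
  unfold aperyT
  rw [← h2, ← h1]
  ring

/-- step in n -/
lemma aperyT_n (k j : ℕ) :
    aperyT (k + j + 1) k = (2 * k + j + 1) / (j + 1) * aperyT (k + j) k := by
  have h1 := aperyT_fact k j
  have h2 := aperyT_fact k (j + 1)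
  rw [show 2 * k + (j + 1) = (2 * k + j) + 1 by ring, Nat.factorial_succ (2 * k + j),
    Nat.factorial_succ j] at h2
  push_cast at h2
  rw [← h1] at h2
  have hk : (k.factorial : ℚ) ≠ 0 := by exact_mod_cast k.factorial_ne_zero
  have hj : (j.factorial : ℚ) ≠ 0 := by exact_mod_cast j.factorial_ne_zero
  have hj1 : (j : ℚ) + 1 ≠ 0 := by positivity
  have h3 : ((k.factorial : ℚ) ^ 2 * j.factorial) ≠ 0 := by positivity
  field_simp
  apply mul_right_cancel₀ h3
  rw [show k + j + 1 = k + (j + 1) by ring]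
  linear_combination h2

/-- step in k -/
lemma aperyT_k (k j : ℕ) :
    aperyT (k + j + 1) k
      = ((k : ℚ) + 1) ^ 2 / ((j + 1) * (2 * k + j + 2)) * aperyT (k + j + 1) (k + 1) := by
  have h1 := aperyT_fact k (j + 1)
  have h2 := aperyT_fact (k + 1) j
  rw [show 2 * (k + 1) + j = (2 * k + (j + 1)) + 1 by ring,
    Nat.factorial_succ (2 * k + (j + 1)), Nat.factorial_succ k,
    show k + 1 + j = k + j + 1 by ring] at h2
  rw [Nat.factorial_succ j, show k + (j + 1) = k + j + 1 by ring] at h1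
  push_cast at h1 h2
  rw [← h1] at h2
  have hk : (k.factorial : ℚ) ≠ 0 := by exact_mod_cast k.factorial_ne_zero
  have hj : (j.factorial : ℚ) ≠ 0 := by exact_mod_cast j.factorial_ne_zero
  have hj1 : (j : ℚ) + 1 ≠ 0 := by positivity
  have hj2 : 2 * (k : ℚ) + j + 2 ≠ 0 := by positivity
  have h3 : ((k.factorial : ℚ) ^ 2 * j.factorial) ≠ 0 := by positivity
  field_simp
  apply mul_right_cancel₀ h3
  linear_combination -h2

lemma aperyC_k (n k : ℕ) : aperyC n (k + 1)
    = aperyC n k + (-1 : ℚ) ^ k / (2 * ((k : ℚ) + 1) ^ 3 * aperyT n (k + 1)) := by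
  unfold aperyC
  rw [Finset.sum_Icc_succ_top (by omega)]
  push_cast
  rw [show (-1 : ℚ) ^ (k + 1 + 1) = (-1) ^ k by ring]
  ring

lemma zseq_succ (n : ℕ) : zseq (n + 1) = zseq n + 1 / ((n : ℚ) + 1) ^ 3 := by
  unfold zseq
  rw [Finset.sum_Icc_succ_top (by omega)]
  push_cast
  rfl

lemma aperyC_k0 (n : ℕ) : aperyC n 0 = zseq n := by simp [aperyC]

/-- step of c in n -/
lemma aperyC_n (k j : ℕ) : aperyC (k + j + 1) k = aperyC (k + j) k
    + (-1 : ℚ) ^ k / (((k : ℚ) + j + 1) ^ 2 * (2 * k + j + 1) * aperyT (k + j) k) := by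
  induction k generalizing j with
  | zero =>
    rw [aperyC_k0, aperyC_k0, zseq_succ, aperyT_k0]
    push_cast
    have : (j : ℚ) + 1 ≠ 0 := by positivity
    field_simp
    ring
  | succ k ih =>
    have h := ih (j + 1)
    have hT := aperyT_pos (show k + 1 ≤ k + j + 1 by omega)
    rw [show k + 1 + j = k + j + 1 by ring, aperyC_k, aperyC_k,
      show k + j + 1 + 1 = k + (j + 1) + 1 by ring, h]
    have h1 := aperyT_n (k + 1) j
    rw [show k + 1 + j = k + j + 1 by ring,
      show k + j + 1 + 1 = k + (j + 1) + 1 by ring] at h1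
    have h2 := aperyT_k k j
    rw [h1, show k + (j + 1) = k + j + 1 by ring, h2]
    generalize aperyT (k + j + 1) (k + 1) = x at hT ⊢
    have hx : x ≠ 0 := hT.ne'
    push_cast
    rw [pow_succ (-1 : ℚ) k]
    generalize (-1 : ℚ) ^ k = s
    have e1 : (j : ℚ) + 1 ≠ 0 := by positivity
    have e2 : 2 * (k : ℚ) + j + 2 ≠ 0 := by positivity
    have e3 : 2 * ((k : ℚ) + 1) + j + 1 ≠ 0 := by positivity
    have e4 : (k : ℚ) + 1 ≠ 0 := by positivity
    have e5 : (k : ℚ) + 1 + j + 1 ≠ 0 := by positivity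
    have e6 : (k : ℚ) + (j + 1) + 1 ≠ 0 := by positivity
    have e7 : 2 * (k : ℚ) + (j + 1) + 1 ≠ 0 := by positivity
    field_simp
    ring

def aperyG (n k : ℕ) : ℚ :=
  4 * (2 * (n : ℚ) + 3) * (k * (2 * k + 1) - (2 * (n : ℚ) + 3) ^ 2) * aperyT (n + 1) k ^ 2

def aperyH (n k : ℕ) : ℚ :=
  aperyG n k * aperyC (n + 1) k
    - 5 * (2 * (n : ℚ) + 3) * (-1) ^ k * k / (((n : ℚ) + 1) * (n + 2)) * aperyT (n + 1) k

/-- Both telescoping identities at once. -/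
lemma apery_step (n k : ℕ) (hk : k ≤ n + 1) :
    (((n : ℚ) + 2) ^ 3 * aperyT (n + 2) (k + 1) ^ 2
      - (17 * (n : ℚ) ^ 2 + 51 * n + 39) * (2 * (n : ℚ) + 3) * aperyT (n + 1) (k + 1) ^ 2
      + ((n : ℚ) + 1) ^ 3 * aperyT n (k + 1) ^ 2 = aperyG n (k + 1) - aperyG n k) ∧
    (((n : ℚ) + 2) ^ 3 * (aperyT (n + 2) (k + 1) ^ 2 * aperyC (n + 2) (k + 1))
      - (17 * (n : ℚ) ^ 2 + 51 * n + 39) * (2 * (n : ℚ) + 3)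
        * (aperyT (n + 1) (k + 1) ^ 2 * aperyC (n + 1) (k + 1))
      + ((n : ℚ) + 1) ^ 3 * (aperyT n (k + 1) ^ 2 * aperyC n (k + 1))
      = aperyH n (k + 1) - aperyH n k) := by
  unfold aperyH aperyG
  rcases Nat.lt_or_ge k n with h | h
  · obtain ⟨j, rfl⟩ : ∃ j, n = k + 1 + j := ⟨n - (k + 1), by omega⟩
    have hT := aperyT_pos (show k + 1 ≤ k + 1 + j by omega)
    have t1 := aperyT_n (k + 1) j
    have t2 := aperyT_n (k + 1) (j + 1)
    have t3 := aperyT_k k (j + 1)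
    have c1 := aperyC_n (k + 1) j
    have c2 := aperyC_n (k + 1) (j + 1)
    have c3 := aperyC_k (k + 1 + j + 1) k
    rw [show k + 1 + (j + 1) + 1 = k + 1 + j + 2 by ring,
      show k + 1 + (j + 1) = k + 1 + j + 1 by ring] at t2 c2
    rw [show k + (j + 1) + 1 = k + 1 + j + 1 by ring] at t3
    have c3' := eq_sub_of_add_eq c3.symm
    rw [c2, c3', c1, t3, t2, t1]
    generalize aperyT (k + 1 + j) (k + 1) = x at hT ⊢
    generalize aperyC (k + 1 + j) (k + 1) = c
    have hx : x ≠ 0 := hT.ne'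
    push_cast
    rw [pow_succ (-1 : ℚ) k]
    generalize (-1 : ℚ) ^ k = s
    generalize hK : (k : ℚ) = K
    generalize hJ : (j : ℚ) = J
    have hK0 : 0 ≤ K := by rw [← hK]; positivity
    have hJ0 : 0 ≤ J := by rw [← hJ]; positivity
    clear hK hJ c1 c2 c3 c3' t1 t2 t3
    constructor
    · field_simp
      ring
    · field_simp
      ring
  · rcases Nat.lt_or_ge n k with h' | h'
    · obtain rfl : k = n + 1 := by omega
      have hT := aperyT_pos (show n + 1 ≤ n + 1 by omega)
      have t1 := aperyT_n (n + 1) 0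
      have t3 := aperyT_k (n + 1) 0
      have c1 := aperyC_n (n + 1) 0
      have c3 := aperyC_k (n + 2) (n + 1)
      simp only [add_zero] at t1 t3 c1
      rw [show n + 1 + 1 = n + 2 by ring] at *
      have t4 : aperyT (n + 2) (n + 2)
        = (2 * (n : ℚ) + 4) / ((n : ℚ) + 2) ^ 2 * aperyT (n + 2) (n + 1) := by
        rw [t3]
        push_cast
        field_simp
        ring
      rw [aperyT_zero (show n + 1 < n + 2 by omega), aperyT_zero (show n < n + 2 by omega),
        c3, c1, t4, t1]
      generalize aperyT (n + 1) (n + 1) = x at hT ⊢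
      generalize aperyC (n + 1) (n + 1) = c
      have hx : x ≠ 0 := hT.ne'
      push_cast
      rw [pow_succ (-1 : ℚ) (n + 1), pow_succ (-1 : ℚ) n]
      generalize (-1 : ℚ) ^ n = s
      generalize hN : (n : ℚ) = N
      have hN0 : 0 ≤ N := by rw [← hN]; positivity
      clear hN t1 t3 t4 c1 c3
      constructor
      · field_simp
        ring
      · field_simp
        ring
    · obtain rfl : k = n := by omega
      have hT := aperyT_pos (show k + 1 ≤ k + 1 by omega)
      have t1 := aperyT_n (k + 1) 0
      have t3 := aperyT_k k 0
      have c1 := aperyC_n (k + 1) 0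
      have c3 := aperyC_k (k + 1) k
      simp only [add_zero] at t1 t3 c1
      rw [show k + 1 + 1 = k + 2 by ring] at *
      have c3' := eq_sub_of_add_eq c3.symm
      rw [aperyT_zero (show k < k + 1 by omega), c1, c3', t1, t3]
      generalize aperyT (k + 1) (k + 1) = x at hT ⊢
      generalize aperyC (k + 1) (k + 1) = c
      have hx : x ≠ 0 := hT.ne'
      push_cast
      rw [pow_succ (-1 : ℚ) k]
      generalize (-1 : ℚ) ^ k = s
      generalize hN : (k : ℚ) = N
      have hN0 : 0 ≤ N := by rw [← hN]; positivity
      clear hN t1 t3 c1 c3 c3'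
      constructor
      · field_simp
        ring
      · field_simp
        ring

lemma aseq_eq (n d : ℕ) : aseq n = ∑ k ∈ Finset.range (n + 1 + d), aperyT n k ^ 2 := by
  induction d with
  | zero => exact Finset.sum_congr rfl fun k _ => by unfold aperyT; ring
  | succ d ih => rw [← add_assoc, Finset.sum_range_succ, ← ih, aperyT_zero (by omega)]; ring

lemma bseq_eq (n d : ℕ) :
    bseq n = ∑ k ∈ Finset.range (n + 1 + d), aperyT n k ^ 2 * aperyC n k := by
  induction d with
  | zero =>
    unfold bseq aperyC
    simp only [mul_add, Finset.sum_add_distrib]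
    rw [← Finset.sum_mul, aseq_eq n 0]
    congr 1
    rw [add_zero, Finset.range_eq_Ico, Finset.sum_eq_sum_Ico_succ_bot (by omega)]
    simp only [Finset.Icc_eq_empty_of_lt (show 0 < 1 by norm_num), Finset.sum_empty, mul_zero,
      zero_add]
    apply Finset.sum_congr (by ext; simp)
    intro k _
    rw [Finset.mul_sum]
    apply Finset.sum_congr rfl
    intro m _
    unfold aperyT
    ring
  | succ d ih => rw [← add_assoc, Finset.sum_range_succ, ← ih, aperyT_zero (by omega)]; ring

lemma apery_tele (n N : ℕ) (hN : N ≤ n + 2) :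
    (((n : ℚ) + 2) ^ 3 * (∑ k ∈ Finset.range (N + 1), aperyT (n + 2) k ^ 2)
      - (17 * (n : ℚ) ^ 2 + 51 * n + 39) * (2 * (n : ℚ) + 3)
        * (∑ k ∈ Finset.range (N + 1), aperyT (n + 1) k ^ 2)
      + ((n : ℚ) + 1) ^ 3 * (∑ k ∈ Finset.range (N + 1), aperyT n k ^ 2) = aperyG n N) ∧
    (((n : ℚ) + 2) ^ 3 * (∑ k ∈ Finset.range (N + 1), aperyT (n + 2) k ^ 2 * aperyC (n + 2) k)
      - (17 * (n : ℚ) ^ 2 + 51 * n + 39) * (2 * (n : ℚ) + 3)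
        * (∑ k ∈ Finset.range (N + 1), aperyT (n + 1) k ^ 2 * aperyC (n + 1) k)
      + ((n : ℚ) + 1) ^ 3 * (∑ k ∈ Finset.range (N + 1), aperyT n k ^ 2 * aperyC n k)
      = aperyH n N) := by
  induction N with
  | zero =>
    simp only [zero_add, Finset.sum_range_one, aperyH, aperyG, aperyT_k0, aperyC_k0]
    rw [show n + 2 = n + 1 + 1 by ring, zseq_succ (n + 1), zseq_succ n]
    push_cast
    constructor
    · ring
    · have e1 : (n : ℚ) + 1 ≠ 0 := by positivity
      have e2 : (n : ℚ) + 2 ≠ 0 := by positivity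
      have e3 : (n : ℚ) + 1 + 1 ≠ 0 := by positivity
      field_simp
      ring
  | succ N ih =>
    obtain ⟨i1, i2⟩ := ih (by omega)
    obtain ⟨s1, s2⟩ := apery_step n N (by omega)
    simp only [Finset.sum_range_succ _ (N + 1)]
    exact ⟨by linear_combination i1 + s1, by linear_combination i2 + s2⟩

/-- Both sequences `a` and `b` satisfy Apéry's second-order recurrence
`(n+2)³ y_{n+2} − (17n²+51n+39)(2n+3) y_{n+1} + (n+1)³ y_n = 0` for all `n ≥ 0`. -/
theorem apery_recurrence :
    (∀ n : ℕ, ((n : ℚ) + 2) ^ 3 * aseq (n + 2)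
        - (17 * (n : ℚ) ^ 2 + 51 * n + 39) * (2 * (n : ℚ) + 3) * aseq (n + 1)
        + ((n : ℚ) + 1) ^ 3 * aseq n = 0) ∧
    (∀ n : ℕ, ((n : ℚ) + 2) ^ 3 * bseq (n + 2)
        - (17 * (n : ℚ) ^ 2 + 51 * n + 39) * (2 * (n : ℚ) + 3) * bseq (n + 1)
        + ((n : ℚ) + 1) ^ 3 * bseq n = 0) := by
  have hz : ∀ n, aperyT (n + 1) (n + 2) = 0 := fun n => aperyT_zero (by omega)
  constructor
  · intro n
    have h := (apery_tele n (n + 2) le_rfl).1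
    rw [aseq_eq (n + 2) 0, aseq_eq (n + 1) 1, aseq_eq n 2]
    simp only [aperyG, hz] at h
    rw [show n + 2 + 1 + 0 = n + 2 + 1 by ring, show n + 1 + 1 + 1 = n + 2 + 1 by ring,
      show n + 1 + 2 = n + 2 + 1 by ring, h]
    ring
  · intro n
    have h := (apery_tele n (n + 2) le_rfl).2
    rw [bseq_eq (n + 2) 0, bseq_eq (n + 1) 1, bseq_eq n 2]
    simp only [aperyH, aperyG, hz] at h
    rw [show n + 2 + 1 + 0 = n + 2 + 1 by ring, show n + 1 + 1 + 1 = n + 2 + 1 by ring,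
      show n + 1 + 2 = n + 2 + 1 by ring, h]
    ring
end
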